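/- Let Γ be a connected k-regular graph on n vertices with exactly four distinct adjacency eigenvalues k > θ₁ > θ₂ > θ₃, and fix an odd integer ℓ ≥ 3. Then Aˡ is a linear combination of I, A, and J (the all-ones matrix) if and only if (θ₂ - θ₃)θ₁ˡ + (θ₃ - θ₁)θ₂ˡ + (θ₁ - θ₂)θ₃ˡ = 0. -/

import Mathlib

open Matrix in
theorem pow_mulVec_of_eig {V : Type*} [Fintype V] [DecidableEq V] (A : Matrix V V ℝ) (v : V → ℝ)
    (μ : ℝ) (h : A *ᵥ v = μ • v) (m : ℕ) : (A ^ m) *ᵥ v = μ ^ m • v := by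
  induction m with
  | zero => simp
  | succ m ih =>
    rw [pow_succ, ← Matrix.mulVec_mulVec, h, Matrix.mulVec_smul, ih, smul_smul, pow_succ, mul_comm]

open Matrix in
theorem eq_zero_of_kills_eig {V : Type*} [Fintype V] [DecidableEq V] (A : Matrix V V ℝ)
    (hA : A.IsHermitian) (M : Matrix V V ℝ)
    (h : ∀ (μ : ℝ) (v : V → ℝ), v ≠ 0 → A *ᵥ v = μ • v → M *ᵥ v = 0) : M = 0 := by
  have key : (Matrix.toLin' M).comp (WithLp.linearEquiv 2 ℝ (V → ℝ)).toLinearMap = 0 := by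
    apply hA.eigenvectorBasis.toBasis.ext
    intro j
    have hj := hA.mulVec_eigenvectorBasis j
    have hne : ((hA.eigenvectorBasis j).ofLp : V → ℝ) ≠ 0 := by
      intro h0
      apply hA.eigenvectorBasis.toBasis.ne_zero j
      ext i
      simpa using congrFun h0 i
    have := h _ _ hne hj
    simpa using this
  apply Matrix.toLin'.injective
  ext1 i
  ext1
  have := LinearMap.congr_fun key ((WithLp.linearEquiv 2 ℝ (V → ℝ)).symm (Pi.single i 1))
  simpa using this

/-- For a connected `k`-regular graph with exactly four distinct adjacency eigenvalues
`k > θ₁ > θ₂ > θ₃`, and an odd `ℓ ≥ 3`: `Aˡ` is a linear combination of `I`, `A`, `J`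
iff `(θ₂-θ₃)θ₁ˡ + (θ₃-θ₁)θ₂ˡ + (θ₁-θ₂)θ₃ˡ = 0`. -/
theorem stmt_7 {V : Type*} [Fintype V] [DecidableEq V] (G : SimpleGraph V)
    [DecidableRel G.Adj] (k : ℕ)
    (hreg : G.IsRegularOfDegree k) (hconn : G.Connected)
    (θ₁ θ₂ θ₃ : ℝ) (h1 : (k : ℝ) > θ₁) (h2 : θ₁ > θ₂) (h3 : θ₂ > θ₃)
    (hspec : {μ : ℝ | ∃ v : V → ℝ, v ≠ 0 ∧ (G.adjMatrix ℝ).mulVec v = μ • v}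
      = {(k : ℝ), θ₁, θ₂, θ₃})
    (ℓ : ℕ) (hodd : Odd ℓ) (hl : 3 ≤ ℓ) :
    (∃ a b c : ℝ, (G.adjMatrix ℝ) ^ ℓ =
        a • (1 : Matrix V V ℝ) + b • G.adjMatrix ℝ + c • Matrix.of (fun _ _ => (1 : ℝ))) ↔
    (θ₂ - θ₃) * θ₁ ^ ℓ + (θ₃ - θ₁) * θ₂ ^ ℓ + (θ₁ - θ₂) * θ₃ ^ ℓ = 0 := by
  classical
  have hpow := pow_mulVec_of_eig (G.adjMatrix ℝ)
  have hJ : ∀ v : V → ℝ, (Matrix.of (fun _ _ => (1 : ℝ)) : Matrix V V ℝ).mulVec v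
      = fun _ => ∑ i, v i := by
    intro v
    ext i
    simp [Matrix.mulVec, dotProduct]
  have hone : (G.adjMatrix ℝ).mulVec (fun _ => (1 : ℝ)) = (k : ℝ) • (fun _ => (1 : ℝ)) := by
    ext i
    rw [SimpleGraph.adjMatrix_mulVec_apply]
    simp [hreg i]
  have hsum : ∀ (μ : ℝ) (v : V → ℝ), (G.adjMatrix ℝ).mulVec v = μ • v → μ ≠ k →
      ∑ i, v i = 0 := by
    intro μ v hv hμ
    have e : (fun _ => (1 : ℝ)) ⬝ᵥ (G.adjMatrix ℝ).mulVec v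
        = ((G.adjMatrix ℝ).mulVec (fun _ => (1 : ℝ))) ⬝ᵥ v := by
      rw [Matrix.dotProduct_mulVec, ← Matrix.mulVec_transpose, SimpleGraph.transpose_adjMatrix]
    rw [hone, hv, dotProduct_smul, smul_dotProduct] at e
    simp only [dotProduct, one_mul, smul_eq_mul] at e
    have : (μ - k) * ∑ i, v i = 0 := by linarith
    exact (mul_eq_zero.mp this).resolve_left (sub_ne_zero.mpr hμ)
  have hconst : ∀ v : V → ℝ, (G.adjMatrix ℝ).mulVec v = (k : ℝ) • v → ∀ i j, v i = v j := by
    intro v hv i j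
    have : (G.lapMatrix ℝ).mulVec v = 0 := by
      ext x
      have := congrFun hv x
      simp only [Pi.smul_apply, smul_eq_mul] at this
      simp [SimpleGraph.lapMatrix, Matrix.sub_mulVec, SimpleGraph.degMatrix,
        Matrix.mulVec_diagonal, hreg x, -SimpleGraph.adjMatrix_mulVec_apply, this]
    exact (SimpleGraph.lapMatrix_mulVec_eq_zero_iff_forall_reachable G).mp this i j
      (hconn.preconnected i j)
  have hnV : (Fintype.card V : ℝ) ≠ 0 := by
    haveI := hconn.nonempty
    exact_mod_cast Fintype.card_ne_zero
  constructor
  · rintro ⟨a, b, c, h⟩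
    have key : ∀ μ : ℝ, μ ∈ ({(k : ℝ), θ₁, θ₂, θ₃} : Set ℝ) → μ ≠ k → μ ^ ℓ = a + b * μ := by
      intro μ hμ hk
      rw [← hspec] at hμ
      obtain ⟨v, hv0, hv⟩ := hμ
      have e := hpow v μ hv ℓ
      rw [h, Matrix.add_mulVec, Matrix.add_mulVec, Matrix.smul_mulVec, Matrix.smul_mulVec,
        Matrix.smul_mulVec, hJ, hv, hsum μ v hv hk, Matrix.one_mulVec] at e
      obtain ⟨i, hi⟩ := Function.ne_iff.mp hv0
      have ei := congrFun e i
      simp at ei hi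
      apply mul_right_cancel₀ hi
      linarith
    rw [key θ₁ (by simp) (by linarith), key θ₂ (by simp) (by linarith),
      key θ₃ (by simp) (by linarith)]
    ring
  · intro h
    have h12 : θ₁ - θ₂ ≠ 0 := by linarith
    obtain ⟨b, hb⟩ : ∃ b, b * (θ₁ - θ₂) = θ₁ ^ ℓ - θ₂ ^ ℓ :=
      ⟨(θ₁ ^ ℓ - θ₂ ^ ℓ) / (θ₁ - θ₂), by field_simp⟩
    obtain ⟨a, ha⟩ : ∃ a, a = θ₁ ^ ℓ - b * θ₁ := ⟨_, rfl⟩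
    obtain ⟨c, hc⟩ : ∃ c, c * (Fintype.card V : ℝ) = (k : ℝ) ^ ℓ - a - b * k :=
      ⟨((k : ℝ) ^ ℓ - a - b * k) / Fintype.card V, by field_simp⟩
    have e1 : θ₁ ^ ℓ = a + b * θ₁ := by linarith
    have e2 : θ₂ ^ ℓ = a + b * θ₂ := by linarith
    have e3 : θ₃ ^ ℓ = a + b * θ₃ := by
      apply mul_left_cancel₀ h12
      rw [e1, e2] at h
      linarith
    refine ⟨a, b, c, ?_⟩
    rw [← sub_eq_zero]
    apply eq_zero_of_kills_eig (G.adjMatrix ℝ) (by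
      rw [Matrix.IsHermitian, Matrix.conjTranspose_eq_transpose_of_trivial,
        SimpleGraph.transpose_adjMatrix])
    intro μ v hv0 hv
    have hμ : μ ∈ ({(k : ℝ), θ₁, θ₂, θ₃} : Set ℝ) := by
      rw [← hspec]
      exact ⟨v, hv0, hv⟩
    rw [Matrix.sub_mulVec, hpow v μ hv ℓ, Matrix.add_mulVec, Matrix.add_mulVec,
      Matrix.smul_mulVec, Matrix.smul_mulVec, Matrix.smul_mulVec, hJ, hv, Matrix.one_mulVec]
    by_cases hk : μ = k
    · subst hk
      ext i
      have hs : ∑ j, v j = Fintype.card V * v i := by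
        rw [Finset.sum_congr rfl (fun j _ => hconst v hv j i)]
        simp
      simp only [hs, Pi.sub_apply, Pi.add_apply, Pi.smul_apply, smul_eq_mul, Pi.zero_apply]
      linear_combination (-v i) * hc
    · have hp : μ ^ ℓ = a + b * μ := by
        rcases hμ with h' | h' | h' | h'
        · exact absurd h' hk
        · rw [h', e1]
        · rw [h', e2]
        · rw [Set.mem_singleton_iff.mp h', e3]
      ext i
      simp only [hsum μ v hv hk, Pi.sub_apply, Pi.add_apply, Pi.smul_apply, smul_eq_mul,
        Pi.zero_apply, hp]
      ring
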